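/- Let F_q be a finite field of odd characteristic p with q = p^n elements. If q ≡ -1 (mod 16) or q ≡ -7 (mod 16), then the unit group U(F_q[QD_32]) is isomorphic to C_{q-1}^4 × GL(2,F_q)^3 × GL(2,F_{q^2})^2; and if q ≡ ±3 (mod 16) or q ≡ ±5 (mod 16), then U(F_q[QD_32]) is isomorphic to C_{q-1}^4 × GL(2,F_q) × GL(2,F_{q^2}) × GL(2,F_{q^4}), where F_{q^m} denotes the field with q^m elements. -/

import Mathlib

/-- Relations for the quasidihedral group `QD_{2^k}`:
`a^(2^(k-1)) = 1`, `x^2 = 1`, `x * a * x = a^(2^(k-2)-1)`. -/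
def qdRels (k : ℕ) : Set (FreeGroup (Fin 2)) :=
  {FreeGroup.of 0 ^ (2 ^ (k - 1)), FreeGroup.of 1 ^ 2,
    FreeGroup.of 1 * FreeGroup.of 0 * FreeGroup.of 1 * (FreeGroup.of 0 ^ (2 ^ (k - 2) - 1))⁻¹}

/-- The quasidihedral group of order 32: `⟨a, x | a^16 = x^2 = 1, x a x = a^7⟩`. -/
def QD32 : Type := PresentedGroup (qdRels 5)

instance : Group QD32 := inferInstanceAs (Group (PresentedGroup (qdRels 5)))

/-!
For `m = 2^(k-1)` and `r = 2^(k-2) - 1`, every element of `F[QD_{2^k}]` is `f(a) + g(a) x` with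
`deg f, deg g < m`. If an algebra homomorphism `Φ` kills it only when `f` and `g` vanish at a root
of unity `s`, the same holds at `s^r` (conjugate by `x`) and at `s^q` (apply Frobenius). So `Φ` is
injective as soon as it detects one exponent in each orbit of `ℤ/m` under multiplication by `r` and
`q`, and it is an isomorphism if moreover its target has dimension `2m`. The exponents `0` and
`m / 2` are detected by pairs of linear characters; any other orbit, represented by `s = ζ^i`, by
the representation induced from `a ↦ s`, whose matrices are defined over every field containing
`s + s^r` and `s^(1+r)`.
-/

open Polynomial

section FiniteField

variable {K L : Type*} [Field K] [Fintype K] [Field L] [Algebra K L]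

theorem mem_range_algebraMap_of_pow_card_eq {y : L} (hy : y ^ Fintype.card K = y) :
    y ∈ (algebraMap K L).range := by
  have hsplits : (X ^ Fintype.card K - X : K[X]).Splits := by
    rw [splits_iff_card_roots, FiniteField.roots_X_pow_card_sub_X,
      FiniteField.X_pow_card_sub_X_natDegree_eq K Fintype.one_lt_card]
    rfl
  refine hsplits.mem_range_of_isRoot (FiniteField.X_pow_card_sub_X_ne_zero K Fintype.one_lt_card) ?_
  simp [hy]

theorem add_and_mul_mem_range_algebraMap {α β : L}
    (h : α ^ Fintype.card K = α ∧ β ^ Fintype.card K = β ∨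
      α ^ Fintype.card K = β ∧ β ^ Fintype.card K = α) :
    α + β ∈ (algebraMap K L).range ∧ α * β ∈ (algebraMap K L).range := by
  have hadd : (α + β) ^ Fintype.card K = α ^ Fintype.card K + β ^ Fintype.card K :=
    map_add (FiniteField.frobeniusAlgHom K L) α β
  constructor <;> apply mem_range_algebraMap_of_pow_card_eq
  · rcases h with ⟨hα, hβ⟩ | ⟨hα, hβ⟩
    · rw [hadd, hα, hβ]
    · rw [hadd, hα, hβ, add_comm]
  · rcases h with ⟨hα, hβ⟩ | ⟨hα, hβ⟩
    · rw [mul_pow, hα, hβ]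
    · rw [mul_pow, hα, hβ, mul_comm]

theorem two_ne_zero_of_odd_card (h : Odd (Fintype.card K)) : (2 : K) ≠ 0 := by
  refine Ring.two_ne_zero fun hchar ↦ ?_
  exact Nat.not_even_iff_odd.2 h (Nat.even_iff.2 (FiniteField.even_card_iff_char_two.1 hchar))

theorem finrank_eq_of_card_eq_pow [Fintype L] {d : ℕ}
    (h : Fintype.card L = Fintype.card K ^ d) : Module.finrank K L = d :=
  Nat.pow_right_injective Fintype.one_lt_card
    (Module.card_eq_pow_finrank.symm.trans h)

theorem nonempty_units_mulEquiv_multiplicative_zmod (K : Type*) [Field K] [Fintype K] :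
    Nonempty (Kˣ ≃* Multiplicative (ZMod (Fintype.card K - 1))) :=
  ⟨mulEquivOfCyclicCardEq <| by
    rw [Nat.card_units, Nat.card_eq_fintype_card, Nat.card_congr Multiplicative.toAdd,
      Nat.card_zmod]⟩

end FiniteField

theorem exists_isPrimitiveRoot_two_pow_algebraicClosure {F : Type*} [Field F] (h2 : (2 : F) ≠ 0)
    (n : ℕ) : ∃ ζ : AlgebraicClosure F, IsPrimitiveRoot ζ (2 ^ n) := by
  have : NeZero ((2 ^ n : ℕ) : AlgebraicClosure F) := ⟨by
    rw [← map_natCast (algebraMap F _), Nat.cast_pow, Nat.cast_two]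
    exact (_root_.map_ne_zero _).2 (pow_ne_zero n h2)⟩
  exact HasEnoughRootsOfUnity.exists_primitiveRoot _ _

theorem eq_zero_of_degree_lt_of_forall_aeval_pow_eq_zero {F L : Type*} [Field F] [Field L]
    [Algebra F L] {ζ : L} {m : ℕ} (hζ : IsPrimitiveRoot ζ m) {f : F[X]} (hf : f ∈ degreeLT F m)
    (hroots : ∀ j < m, aeval (ζ ^ j) f = 0) : f = 0 := by
  have hinj : Set.InjOn (fun j ↦ ζ ^ j) (Finset.range m) := fun i hi j hj hij ↦
    hζ.pow_inj (Finset.mem_range.1 hi) (Finset.mem_range.1 hj) hij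
  have hmap : f.map (algebraMap F L) = 0 := by
    refine eq_zero_of_degree_lt_of_eval_index_eq_zero (Finset.range m) hinj ?_ ?_
    · rw [degree_map, Finset.card_range]
      exact mem_degreeLT.1 hf
    · intro j hj
      rw [eval_map_algebraMap]
      exact hroots j (Finset.mem_range.1 hj)
  exact (Polynomial.map_eq_zero _).1 hmap

theorem nonempty_units_mulEquiv_of_mulEquiv_prod {A F T G : Type*} [Field F] [Fintype F]
    [Monoid A] [Monoid T] [MulOneClass G] (e : A ≃* (F × F) × (F × F) × T) (u : Tˣ ≃* G) :
    Nonempty (Aˣ ≃* Multiplicative (ZMod (Fintype.card F - 1)) ×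
      Multiplicative (ZMod (Fintype.card F - 1)) × Multiplicative (ZMod (Fintype.card F - 1)) ×
      Multiplicative (ZMod (Fintype.card F - 1)) × G) := by
  obtain ⟨c⟩ := nonempty_units_mulEquiv_multiplicative_zmod F
  let c₂ := (MulEquiv.prodUnits (M := F) (N := F)).trans (c.prodCongr c)
  exact ⟨(Units.mapEquiv e).trans <| MulEquiv.prodUnits.trans <|
    (c₂.prodCongr (MulEquiv.prodUnits.trans (c₂.prodCongr u))).trans <|
    MulEquiv.prodAssoc.trans <| .prodCongr (.refl _) (.prodCongr (.refl _) .prodAssoc)⟩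

theorem exists_mul_pow_modEq_of_modEq {m r q c : ℕ} {S : Finset ℕ} (hqc : q ≡ c [MOD m]) {N : ℕ}
    (h : ∀ j < m, ∃ i ∈ S, ∃ l < N, i * c ^ l ≡ j [MOD m] ∨ i * r * c ^ l ≡ j [MOD m]) :
    ∀ j < m, ∃ i ∈ S, ∃ l, i * q ^ l ≡ j [MOD m] ∨ i * r * q ^ l ≡ j [MOD m] := by
  intro j hj
  obtain ⟨i, hi, l, -, hij⟩ := h j hj
  have hpow := hqc.pow l
  exact ⟨i, hi, l, hij.imp (hpow.mul_left i).trans (hpow.mul_left (i * r)).trans⟩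

-- The witness conjugates the companion matrix of `(X - α)(X - β)` to its diagonal form.
theorem exists_injective_algHom_map_eq_diagonal_and_swap {F K L : Type*} [Field F] [Field K]
    [Field L] [Algebra F K] [Algebra F L] (ι : K →ₐ[F] L) {α β : L} (hαβ : α ≠ β)
    (hadd : α + β ∈ ι.range) (hmul : α * β ∈ ι.range) :
    ∃ (ψ : Matrix (Fin 2) (Fin 2) K →ₐ[F] Matrix (Fin 2) (Fin 2) L)
      (A W : Matrix (Fin 2) (Fin 2) K),
      Function.Injective ψ ∧ ψ A = Matrix.diagonal ![α, β] ∧ ψ W = !![0, 1; 1, 0] := by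
  obtain ⟨t, ht⟩ : ∃ t, ι t = α + β := hadd
  obtain ⟨n, hn⟩ : ∃ n, ι n = α * β := hmul
  let P : GL (Fin 2) L := .mkOfDetNeZero !![1, α; 1, β]
    (by simpa [Matrix.det_fin_two_of, sub_eq_zero] using hαβ.symm)
  let conj : Matrix (Fin 2) (Fin 2) L ≃ₐ[F] Matrix (Fin 2) (Fin 2) L :=
    MulSemiringAction.toAlgEquiv F _ (ConjAct.toConjAct P)
  have conj_eq {M N : Matrix (Fin 2) (Fin 2) L}
      (h : !![1, α; 1, β] * M = N * !![1, α; 1, β]) : conj M = N := by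
    change ConjAct.toConjAct P • M = N
    rw [ConjAct.units_smul_def, ConjAct.ofConjAct_toConjAct, Units.mul_inv_eq_iff_eq_mul]
    exact h
  refine ⟨conj.toAlgHom.comp ι.mapMatrix, !![0, -n; 1, t], !![1, t; 0, -1],
    conj.injective.comp (Matrix.map_injective ι.injective), conj_eq ?_, conj_eq ?_⟩
  · ext i j
    fin_cases i <;> fin_cases j <;> simp [Matrix.mul_apply, Fin.sum_univ_two, ht, hn] <;> ring
  · ext i j
    fin_cases i <;> fin_cases j <;> simp [Matrix.mul_apply, Fin.sum_univ_two, ht]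

theorem aeval_diagonal_add_aeval_diagonal_mul_swap {R A : Type*} [CommSemiring R] [CommSemiring A]
    [Algebra R A] (α β : A) (f g : R[X]) :
    aeval (Matrix.diagonal ![α, β]) f + aeval (Matrix.diagonal ![α, β]) g * !![0, 1; 1, 0] =
      !![aeval α f, aeval α g; aeval β g, aeval β f] := by
  have aeval_diagonal (h : R[X]) :
      aeval (Matrix.diagonal ![α, β]) h = Matrix.diagonal ![aeval α h, aeval β h] := by
    rw [← Matrix.diagonalAlgHom_apply (R := R), aeval_algHom_apply, Matrix.diagonalAlgHom_apply]
    congr 1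
    ext i
    fin_cases i <;> simp [aeval_pi_apply]
  rw [aeval_diagonal, aeval_diagonal]
  ext i j
  fin_cases i <;> fin_cases j <;> simp [Matrix.mul_apply, Fin.sum_univ_two]

/-- A pair of elements of a monoid satisfying the defining relations `a^(2^(k-1)) = 1`, `x^2 = 1`,
`x a x = a^(2^(k-2)-1)` of the quasidihedral group of order `2^k`. -/
structure IsQuasidihedralPair (k : ℕ) {M : Type*} [Monoid M] (a x : M) : Prop where
  pow_eq_one : a ^ 2 ^ (k - 1) = 1
  sq_eq_one : x ^ 2 = 1
  conj_eq_pow : x * a * x = a ^ (2 ^ (k - 2) - 1)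

namespace IsQuasidihedralPair

variable {k : ℕ} {M : Type*} [Monoid M] {a x : M}

theorem mul_pow_comm (h : IsQuasidihedralPair k a x) (i : ℕ) :
    x * a ^ i = a ^ ((2 ^ (k - 2) - 1) * i) * x := by
  have hxa : SemiconjBy x a (a ^ (2 ^ (k - 2) - 1)) := by
    rw [SemiconjBy, ← h.conj_eq_pow, mul_assoc, ← pow_two, h.sq_eq_one, mul_one]
  rw [pow_mul]
  exact hxa.pow_right i

theorem map {N : Type*} [Monoid N] (h : IsQuasidihedralPair k a x) (φ : M →* N) :
    IsQuasidihedralPair k (φ a) (φ x) where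
  pow_eq_one := by rw [← map_pow, h.pow_eq_one, map_one]
  sq_eq_one := by rw [← map_pow, h.sq_eq_one, map_one]
  conj_eq_pow := by rw [← map_mul, ← map_mul, h.conj_eq_pow, map_pow]

theorem of_map {N : Type*} [Monoid N] {φ : M →* N} (hφ : Function.Injective φ)
    (h : IsQuasidihedralPair k (φ a) (φ x)) : IsQuasidihedralPair k a x where
  pow_eq_one := hφ (by rw [map_pow, h.pow_eq_one, map_one])
  sq_eq_one := hφ (by rw [map_pow, h.sq_eq_one, map_one])
  conj_eq_pow := hφ (by rw [map_mul, map_mul, h.conj_eq_pow, map_pow])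

theorem mul_aeval {R B : Type*} [CommSemiring R] [Semiring B] [Algebra R B] {a x : B}
    (h : IsQuasidihedralPair k a x) (f : R[X]) :
    x * aeval a f = aeval a (expand R (2 ^ (k - 2) - 1) f) * x := by
  rw [expand_aeval]
  induction f using Polynomial.induction_on' with
  | add f g hf hg => rw [map_add, map_add, mul_add, add_mul, hf, hg]
  | monomial i c =>
    rw [aeval_monomial, aeval_monomial, Algebra.left_comm, h.mul_pow_comm, pow_mul, mul_assoc]

theorem of_sq_eq_one {R : Type*} [CommMonoid R] {e d : R} (hk : 3 ≤ k) (he : e ^ 2 = 1)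
    (hd : d ^ 2 = 1) : IsQuasidihedralPair k e d where
  pow_eq_one := by
    obtain ⟨l, hl⟩ : 2 ∣ 2 ^ (k - 1) := dvd_pow_self 2 (by omega)
    rw [hl, pow_mul, he, one_pow]
  sq_eq_one := hd
  conj_eq_pow := by
    obtain ⟨l, hl⟩ : Odd (2 ^ (k - 2) - 1) :=
      Nat.Even.sub_odd Nat.one_le_two_pow (even_two.pow_of_ne_zero (by omega)) odd_one
    rw [mul_right_comm, ← pow_two, hd, one_mul, hl, pow_succ, pow_mul, he, one_pow, one_mul]

theorem diagonal_swap {L : Type*} [CommSemiring L] {α β : L} (hα : α ^ 2 ^ (k - 1) = 1)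
    (hαβ : α ^ (2 ^ (k - 2) - 1) = β) (hβα : β ^ (2 ^ (k - 2) - 1) = α) :
    IsQuasidihedralPair k (Matrix.diagonal ![α, β]) !![0, 1; 1, 0] where
  pow_eq_one := by
    have hβ : β ^ 2 ^ (k - 1) = 1 := by rw [← hαβ, pow_right_comm, hα, one_pow]
    rw [Matrix.diagonal_pow, ← Matrix.diagonal_one]
    congr 1
    ext i
    fin_cases i <;> simpa
  sq_eq_one := by
    rw [pow_two, Matrix.mul_fin_two, Matrix.one_fin_two]
    simp
  conj_eq_pow := by
    rw [Matrix.diagonal_pow]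
    ext i j
    fin_cases i <;> fin_cases j <;>
      simp [Matrix.mul_apply, Fin.sum_univ_two, Matrix.vecMul_diagonal, hαβ, hβα]

end IsQuasidihedralPair

/-- The quasidihedral group of order `2^k`, given by its standard presentation. -/
abbrev QuasidihedralGroup (k : ℕ) : Type := PresentedGroup (qdRels k)

namespace QuasidihedralGroup

/-- The generator of order `2^(k-1)`. -/
def rotation (k : ℕ) : QuasidihedralGroup k := PresentedGroup.of 0

/-- The generator of order `2`. -/
def reflection (k : ℕ) : QuasidihedralGroup k := PresentedGroup.of 1

theorem isQuasidihedralPair (k : ℕ) : IsQuasidihedralPair k (rotation k) (reflection k) where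
  pow_eq_one := PresentedGroup.one_of_mem (rels := qdRels k) (.inl rfl)
  sq_eq_one := PresentedGroup.one_of_mem (rels := qdRels k) (.inr (.inl rfl))
  conj_eq_pow := PresentedGroup.mk_eq_mk_of_mul_inv_mem (rels := qdRels k) (.inr (.inr rfl))

theorem exists_eq_pow_or_eq_pow_mul {k : ℕ} (g : QuasidihedralGroup k) :
    ∃ i : ℕ, g = rotation k ^ i ∨ g = rotation k ^ i * reflection k := by
  have hpair := isQuasidihedralPair k
  let N : Set (QuasidihedralGroup k) :=
    {y | ∃ i : ℕ, y = rotation k ^ i ∨ y = rotation k ^ i * reflection k}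
  have pow_mul_mem (j : ℕ) {y : QuasidihedralGroup k} : y ∈ N → rotation k ^ j * y ∈ N := by
    rintro ⟨i, rfl | rfl⟩
    · exact ⟨j + i, .inl (pow_add ..).symm⟩
    · exact ⟨j + i, .inr (by rw [pow_add, mul_assoc])⟩
  have reflection_mul_mem {y : QuasidihedralGroup k} : y ∈ N → reflection k * y ∈ N := by
    rintro ⟨i, rfl | rfl⟩
    · exact ⟨_, .inr (hpair.mul_pow_comm i)⟩
    · exact ⟨_, .inl (by
        rw [← mul_assoc, hpair.mul_pow_comm, mul_assoc, ← pow_two, hpair.sq_eq_one, mul_one])⟩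
  have rotation_inv : (rotation k)⁻¹ = rotation k ^ (2 ^ (k - 1) - 1) := by
    rw [inv_eq_iff_mul_eq_one, ← pow_succ', Nat.sub_add_cancel Nat.one_le_two_pow,
      hpair.pow_eq_one]
  have reflection_inv : (reflection k)⁻¹ = reflection k := by
    rw [inv_eq_iff_mul_eq_one, ← pow_two, hpair.sq_eq_one]
  have hg : g ∈ Subgroup.closure (Set.range PresentedGroup.of) := by
    rw [PresentedGroup.closure_range_of]
    exact Subgroup.mem_top g
  change g ∈ N
  induction hg using Subgroup.closure_induction_left with
  | one => exact ⟨0, .inl (pow_zero _).symm⟩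
  | mul_left s hs y _ hy =>
    obtain ⟨i, rfl⟩ := hs
    fin_cases i
    · simpa only [pow_one] using! pow_mul_mem 1 hy
    · exact reflection_mul_mem hy
  | inv_mul_cancel s hs y _ hy =>
    obtain ⟨i, rfl⟩ := hs
    fin_cases i
    · exact rotation_inv ▸ pow_mul_mem (2 ^ (k - 1) - 1) hy
    · exact reflection_inv.symm ▸ reflection_mul_mem hy

theorem exists_monoidHom {k : ℕ} {M : Type*} [Monoid M] {a x : M}
    (h : IsQuasidihedralPair k a x) :
    ∃ φ : QuasidihedralGroup k →* M, φ (rotation k) = a ∧ φ (reflection k) = x := by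
  let u : Fin 2 → Mˣ :=
    ![.ofPowEqOne a _ h.pow_eq_one (by positivity), .ofPowEqOne x 2 h.sq_eq_one two_ne_zero]
  have hrels : ∀ r ∈ qdRels k, FreeGroup.lift u r = 1 := by
    rintro r (rfl | rfl | rfl)
    · ext
      simp [u]
    · ext
      simp [u]
    · rw [map_mul, map_inv, mul_inv_eq_one]
      ext
      simp [u, h.conj_eq_pow]
  refine ⟨(Units.coeHom M).comp (PresentedGroup.toGroup hrels), ?_, ?_⟩ <;>
    simp [rotation, reflection, u]

theorem conj_exponent_mul_self_modEq_one {k : ℕ} (hk : 3 ≤ k) :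
    (2 ^ (k - 2) - 1) * (2 ^ (k - 2) - 1) ≡ 1 [MOD 2 ^ (k - 1)] := by
  obtain ⟨j, rfl⟩ := Nat.exists_eq_add_of_le' hk
  obtain ⟨c, hc⟩ := Nat.exists_eq_add_of_le' (Nat.one_le_two_pow (n := j))
  have hsq : (2 ^ (j + 3 - 2) - 1) * (2 ^ (j + 3 - 2) - 1) = 1 + 2 ^ (j + 3 - 1) * c := by
    simp only [show j + 3 - 2 = j + 1 by omega, show j + 3 - 1 = j + 2 by omega, pow_succ, hc,
      show (c + 1) * 2 - 1 = 2 * c + 1 by omega]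
    ring
  rw [hsq]
  exact Nat.add_modEq_left_iff.2 (dvd_mul_right ..)

variable {R : Type*} [CommRing R]

/-- The element `f(a) + g(a) x` of the group algebra attached to a pair of polynomials `(f, g)`,
where `a` and `x` are the generators. -/
noncomputable def normalForm (R : Type*) [CommRing R] (k : ℕ) :
    R[X] × R[X] →ₗ[R] MonoidAlgebra R (QuasidihedralGroup k) :=
  (aeval (MonoidAlgebra.of R _ (rotation k))).toLinearMap.coprod
    (LinearMap.mulRight R (MonoidAlgebra.of R _ (reflection k)) ∘ₗ
      (aeval (MonoidAlgebra.of R _ (rotation k))).toLinearMap)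

theorem normalForm_apply (k : ℕ) (f g : R[X]) :
    normalForm R k (f, g) = aeval (MonoidAlgebra.of R _ (rotation k)) f +
      aeval (MonoidAlgebra.of R _ (rotation k)) g * MonoidAlgebra.of R _ (reflection k) := by
  simp [normalForm]

theorem normalForm_surjective (R : Type*) [CommRing R] (k : ℕ) :
    Function.Surjective (normalForm R k) := by
  rw [← LinearMap.range_eq_top, eq_top_iff]
  rintro z -
  induction z using MonoidAlgebra.induction_linear with
  | zero => exact zero_mem _
  | add _ _ hz hw => exact add_mem hz hw
  | single g c =>
    obtain ⟨i, rfl | rfl⟩ := exists_eq_pow_or_eq_pow_mul g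
    · exact ⟨(monomial i c, 0), by
        simp [normalForm_apply, aeval_monomial, MonoidAlgebra.single_pow]⟩
    · exact ⟨(0, monomial i c), by
        simp [normalForm_apply, aeval_monomial, MonoidAlgebra.single_pow,
          MonoidAlgebra.single_mul_single]⟩

theorem exists_normalForm_eq_of_degree_lt [Nontrivial R] {k : ℕ}
    (z : MonoidAlgebra R (QuasidihedralGroup k)) :
    ∃ f ∈ degreeLT R (2 ^ (k - 1)), ∃ g ∈ degreeLT R (2 ^ (k - 1)), normalForm R k (f, g) = z := by
  let P : R[X] := X ^ 2 ^ (k - 1) - 1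
  have hP : P.Monic := monic_X_pow_sub_C 1 (by positivity)
  have hroot : aeval (MonoidAlgebra.of R _ (rotation k)) P = 0 := by
    rw [map_sub, map_one, aeval_X_pow, ← map_pow, (isQuasidihedralPair k).pow_eq_one, map_one,
      sub_self]
  have hdegree (f : R[X]) : f %ₘ P ∈ degreeLT R (2 ^ (k - 1)) := by
    rw [mem_degreeLT]
    exact (degree_modByMonic_lt f hP).trans_eq (degree_X_pow_sub_C (by positivity) 1)
  obtain ⟨⟨f, g⟩, rfl⟩ := normalForm_surjective R k z
  refine ⟨f %ₘ P, hdegree f, g %ₘ P, hdegree g, ?_⟩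
  rw [normalForm_apply, normalForm_apply, aeval_modByMonic_eq_self_of_root hroot,
    aeval_modByMonic_eq_self_of_root hroot]

theorem normalForm_expand (k : ℕ) (f g : R[X]) :
    normalForm R k (expand R (2 ^ (k - 2) - 1) f, expand R (2 ^ (k - 2) - 1) g) =
      MonoidAlgebra.of R _ (reflection k) * normalForm R k (f, g) *
        MonoidAlgebra.of R _ (reflection k) := by
  have hpair := (isQuasidihedralPair k).map (MonoidAlgebra.of R _)
  have hsq := hpair.sq_eq_one
  rw [pow_two] at hsq
  rw [normalForm_apply, normalForm_apply, mul_add, ← mul_assoc, hpair.mul_aeval, hpair.mul_aeval,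
    add_mul, mul_assoc _ _ (MonoidAlgebra.of R _ (reflection k)), hsq,
    mul_one, mul_assoc _ _ (MonoidAlgebra.of R _ (reflection k)), hsq, mul_one]

theorem exists_algHom {k : ℕ} {B : Type*} [Ring B] [Algebra R B] {a x : B}
    (h : IsQuasidihedralPair k a x) :
    ∃ Φ : MonoidAlgebra R (QuasidihedralGroup k) →ₐ[R] B,
      ∀ f g, Φ (normalForm R k (f, g)) = aeval a f + aeval a g * x := by
  obtain ⟨φ, hφa, hφx⟩ := exists_monoidHom h
  refine ⟨MonoidAlgebra.lift R B _ φ, fun f g ↦ ?_⟩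
  rw [normalForm_apply, map_add, map_mul, ← aeval_algHom_apply, ← aeval_algHom_apply,
    MonoidAlgebra.lift_of, MonoidAlgebra.lift_of, hφa, hφx]

variable (L : Type*) [CommRing L] [Algebra R L] {k : ℕ}

/-- The points of `L` at which the two coefficient polynomials of every normal form
`f(a) + g(a) x` in the kernel of `Φ` vanish. -/
def kernelRoots {B : Type*} [Ring B] [Algebra R B]
    (Φ : MonoidAlgebra R (QuasidihedralGroup k) →ₐ[R] B) : Set L :=
  {s | ∀ f g : R[X], Φ (normalForm R k (f, g)) = 0 → aeval s f = 0 ∧ aeval s g = 0}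

section kernelRoots

variable {L} {B : Type*} [Ring B] [Algebra R B]
  {Φ : MonoidAlgebra R (QuasidihedralGroup k) →ₐ[R] B} {s : L}

theorem mem_kernelRoots_prod_left {C : Type*} [Ring C] [Algebra R C]
    (Ψ : MonoidAlgebra R (QuasidihedralGroup k) →ₐ[R] C) (hs : s ∈ kernelRoots L Φ) :
    s ∈ kernelRoots L (Φ.prod Ψ) :=
  fun f g h ↦ hs f g (congrArg Prod.fst h)

theorem mem_kernelRoots_prod_right {C : Type*} [Ring C] [Algebra R C]
    (Ψ : MonoidAlgebra R (QuasidihedralGroup k) →ₐ[R] C) (hs : s ∈ kernelRoots L Φ) :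
    s ∈ kernelRoots L (Ψ.prod Φ) :=
  fun f g h ↦ hs f g (congrArg Prod.snd h)

theorem pow_conj_mem_kernelRoots (hs : s ∈ kernelRoots L Φ) :
    s ^ (2 ^ (k - 2) - 1) ∈ kernelRoots L Φ := by
  intro f g h
  rw [← expand_aeval, ← expand_aeval]
  refine hs _ _ ?_
  rw [normalForm_expand, map_mul, map_mul, h, mul_zero, zero_mul]

theorem pow_card_pow_mem_kernelRoots {F : Type*} [Field F] [Fintype F] [Algebra F L] [Algebra F B]
    {Φ : MonoidAlgebra F (QuasidihedralGroup k) →ₐ[F] B} (hs : s ∈ kernelRoots L Φ) (l : ℕ) :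
    s ^ Fintype.card F ^ l ∈ kernelRoots L Φ := by
  have aeval_pow_card (f : F[X]) (hf : aeval s f = 0) : aeval (s ^ Fintype.card F ^ l) f = 0 := by
    have := aeval_algHom_apply (FiniteField.frobeniusAlgHom F L ^ l) s f
    rwa [hf, map_zero, AlgHom.coe_pow, FiniteField.coe_frobeniusAlgHom, pow_iterate] at this
  intro f g h
  exact ⟨aeval_pow_card f (hs f g h).1, aeval_pow_card g (hs f g h).2⟩

end kernelRoots

section Detection

variable {k : ℕ} {F : Type*} [Field F] {L : Type*} [Field L] [Algebra F L] {ζ : L}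

theorem bijective_of_forall_pow_mem_kernelRoots {T : Type*} [Ring T] [Algebra F T]
    [FiniteDimensional F T] (hT : Module.finrank F T = 2 * 2 ^ (k - 1))
    {Φ : MonoidAlgebra F (QuasidihedralGroup k) →ₐ[F] T} (hζ : IsPrimitiveRoot ζ (2 ^ (k - 1)))
    (hΦ : ∀ j < 2 ^ (k - 1), ζ ^ j ∈ kernelRoots L Φ) : Function.Bijective Φ := by
  let D := degreeLT F (2 ^ (k - 1))
  let N : D × D →ₗ[F] MonoidAlgebra F (QuasidihedralGroup k) :=
    normalForm F k ∘ₗ D.subtype.prodMap D.subtype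
  have hN : Function.Surjective N := fun z ↦ by
    obtain ⟨f, hf, g, hg, rfl⟩ := exists_normalForm_eq_of_degree_lt z
    exact ⟨(⟨f, hf⟩, ⟨g, hg⟩), rfl⟩
  have hinj : Function.Injective (Φ.toLinearMap ∘ₗ N) := by
    rw [injective_iff_map_eq_zero]
    rintro ⟨⟨f, hf⟩, ⟨g, hg⟩⟩ h
    ext1 <;> ext1
    · exact eq_zero_of_degree_lt_of_forall_aeval_pow_eq_zero hζ hf fun j hj ↦ (hΦ j hj f g h).1
    · exact eq_zero_of_degree_lt_of_forall_aeval_pow_eq_zero hζ hg fun j hj ↦ (hΦ j hj f g h).2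
  have hD : Module.finrank F D = 2 ^ (k - 1) := by
    rw [(degreeLTEquiv F _).finrank_eq, Module.finrank_fin_fun]
  have : FiniteDimensional F D := (degreeLTEquiv F _).symm.finiteDimensional
  have hsurj : Function.Surjective (Φ.toLinearMap ∘ₗ N) := by
    rwa [← LinearMap.injective_iff_surjective_of_finrank_eq_finrank]
    rw [hT, Module.finrank_prod, hD, two_mul]
  exact ⟨.of_comp_right hinj hN, Function.Surjective.of_comp (g := N) hsurj⟩

/-- Some representation of the group algebra `F[QD_{2^k}]` in `T` detects the powers `ζ^i`,
`i ∈ S`, of the generator `a`: if it kills `f(a) + g(a) x`, then `f` and `g` vanish at them. -/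
def DetectsPowers (k : ℕ) (F : Type*) [Field F] {L : Type*} [Field L] [Algebra F L] (ζ : L)
    (T : Type*) [Ring T] [Algebra F T] (S : Finset ℕ) : Prop :=
  ∃ Φ : MonoidAlgebra F (QuasidihedralGroup k) →ₐ[F] T, ∀ i ∈ S, ζ ^ i ∈ kernelRoots L Φ

namespace DetectsPowers

variable {T : Type*} [Ring T] [Algebra F T] {S : Finset ℕ}

theorem prod {T' : Type*} [Ring T'] [Algebra F T'] {S' : Finset ℕ} (h : DetectsPowers k F ζ T S)
    (h' : DetectsPowers k F ζ T' S') : DetectsPowers k F ζ (T × T') (S ∪ S') := by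
  obtain ⟨Φ, hΦ⟩ := h
  obtain ⟨Φ', hΦ'⟩ := h'
  exact ⟨Φ.prod Φ', fun i hi ↦ (Finset.mem_union.1 hi).elim
    (fun hi ↦ mem_kernelRoots_prod_left Φ' (hΦ i hi))
    fun hi ↦ mem_kernelRoots_prod_right Φ (hΦ' i hi)⟩

theorem nonempty_algEquiv [Fintype F] [FiniteDimensional F T] (h : DetectsPowers k F ζ T S)
    (hζ : IsPrimitiveRoot ζ (2 ^ (k - 1))) (hT : Module.finrank F T = 2 * 2 ^ (k - 1))
    (hS : ∀ j < 2 ^ (k - 1), ∃ i ∈ S, ∃ l, i * Fintype.card F ^ l ≡ j [MOD 2 ^ (k - 1)] ∨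
      i * (2 ^ (k - 2) - 1) * Fintype.card F ^ l ≡ j [MOD 2 ^ (k - 1)]) :
    Nonempty (MonoidAlgebra F (QuasidihedralGroup k) ≃ₐ[F] T) := by
  obtain ⟨Φ, hΦ⟩ := h
  refine ⟨.ofBijective Φ (bijective_of_forall_pow_mem_kernelRoots hT hζ fun j hj ↦ ?_)⟩
  obtain ⟨i, hi, l, hij | hij⟩ := hS j hj
  · rw [← pow_eq_pow_of_modEq hij hζ.pow_eq_one, pow_mul]
    exact pow_card_pow_mem_kernelRoots (hΦ i hi) l
  · rw [← pow_eq_pow_of_modEq hij hζ.pow_eq_one, pow_mul, pow_mul]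
    exact pow_card_pow_mem_kernelRoots (pow_conj_mem_kernelRoots (hΦ i hi)) l

theorem of_sq_eq_one (hk : 3 ≤ k) (h2 : (2 : F) ≠ 0) {i : ℕ} (hi : (ζ ^ i) ^ 2 = 1) :
    DetectsPowers k F ζ (F × F) {i} := by
  obtain ⟨e, he, hζi⟩ : ∃ e : F, e ^ 2 = 1 ∧ ζ ^ i = algebraMap F L e := by
    rcases sq_eq_one_iff.1 hi with h | h
    · exact ⟨1, one_pow 2, by rw [h, map_one]⟩
    · exact ⟨-1, neg_one_sq, by rw [h, map_neg, map_one]⟩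
  obtain ⟨χ, hχ⟩ := exists_algHom (R := F) (IsQuasidihedralPair.of_sq_eq_one hk he (one_pow 2))
  obtain ⟨χ', hχ'⟩ := exists_algHom (R := F) (IsQuasidihedralPair.of_sq_eq_one hk he neg_one_sq)
  refine ⟨χ.prod χ', ?_⟩
  intro j hj f g h
  obtain rfl := Finset.mem_singleton.1 hj
  have hadd : aeval e f + aeval e g * 1 = 0 := (hχ f g).symm.trans (congrArg Prod.fst h)
  have hsub : aeval e f + aeval e g * -1 = 0 := (hχ' f g).symm.trans (congrArg Prod.snd h)
  have hf : aeval e f = 0 := by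
    refine (mul_eq_zero.1 ?_).resolve_left h2
    linear_combination hadd + hsub
  have hg : aeval e g = 0 := by linear_combination hadd - hf
  rw [hζi, aeval_algebraMap_apply, aeval_algebraMap_apply, hf, hg, map_zero]
  exact ⟨rfl, rfl⟩

theorem linear_prod (h : DetectsPowers k F ζ T S) (hk : 3 ≤ k) (h2 : (2 : F) ≠ 0)
    (hζ : IsPrimitiveRoot ζ (2 ^ (k - 1))) :
    DetectsPowers k F ζ ((F × F) × (F × F) × T) ({0} ∪ ({2 ^ (k - 2)} ∪ S)) := by
  have hsq : (ζ ^ 2 ^ (k - 2)) ^ 2 = 1 := by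
    rw [← pow_mul, ← pow_succ, show k - 2 + 1 = k - 1 by omega, hζ.pow_eq_one]
  exact (of_sq_eq_one hk h2 (by rw [pow_zero, one_pow])).prod ((of_sq_eq_one hk h2 hsq).prod h)

end DetectsPowers

end Detection

section MatrixRepresentation

variable {k : ℕ} {F K L : Type*} [Field F] [Field K] [Field L] [Algebra F K] [Algebra F L]

theorem exists_algHom_matrix_mem_kernelRoots (ι : K →ₐ[F] L) {α β : L} (hne : α ≠ β)
    (hadd : α + β ∈ ι.range) (hmul : α * β ∈ ι.range) (hα : α ^ 2 ^ (k - 1) = 1)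
    (hαβ : α ^ (2 ^ (k - 2) - 1) = β) (hβα : β ^ (2 ^ (k - 2) - 1) = α) :
    ∃ ρ : MonoidAlgebra F (QuasidihedralGroup k) →ₐ[F] Matrix (Fin 2) (Fin 2) K,
      α ∈ kernelRoots L ρ := by
  obtain ⟨ψ, A, W, hψ, hA, hW⟩ :=
    exists_injective_algHom_map_eq_diagonal_and_swap ι hne hadd hmul
  have hpair : IsQuasidihedralPair k A W := by
    refine .of_map (φ := ψ.toRingHom.toMonoidHom) hψ ?_
    simpa [hA, hW] using IsQuasidihedralPair.diagonal_swap hα hαβ hβα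
  obtain ⟨ρ, hρ⟩ := exists_algHom (R := F) hpair
  refine ⟨ρ, fun f g h ↦ ?_⟩
  have heval : !![aeval α f, aeval α g; aeval β g, aeval β f] = 0 := by
    rw [← aeval_diagonal_add_aeval_diagonal_mul_swap, ← hA, ← hW, aeval_algHom_apply,
      aeval_algHom_apply, ← map_mul, ← map_add, ← hρ, h, map_zero]
  exact ⟨congrFun₂ heval 0 0, congrFun₂ heval 0 1⟩

theorem DetectsPowers.matrix [Fintype K] (ι : K →ₐ[F] L) (hk : 3 ≤ k) {ζ : L}
    (hζ : IsPrimitiveRoot ζ (2 ^ (k - 1))) {i : ℕ}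
    (hi : ¬ i ≡ i * (2 ^ (k - 2) - 1) [MOD 2 ^ (k - 1)])
    (hK : i * Fintype.card K ≡ i [MOD 2 ^ (k - 1)] ∨
      i * Fintype.card K ≡ i * (2 ^ (k - 2) - 1) [MOD 2 ^ (k - 1)]) :
    DetectsPowers k F ζ (Matrix (Fin 2) (Fin 2) K) {i} := by
  set r := 2 ^ (k - 2) - 1
  have pow_eq {a b : ℕ} (h : a ≡ b [MOD 2 ^ (k - 1)]) : ζ ^ a = ζ ^ b :=
    pow_eq_pow_of_modEq h hζ.pow_eq_one
  have hrr : i * r * r ≡ i [MOD 2 ^ (k - 1)] := by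
    simpa only [mul_assoc, mul_one] using (conj_exponent_mul_self_modEq_one hk).mul_left i
  have hne : ζ ^ i ≠ ζ ^ (i * r) := fun h ↦ hi (by
    rwa [hζ.eq_orderOf, ← (hζ.isOfFinOrder (by positivity)).pow_eq_pow_iff_modEq])
  have hfrob : (ζ ^ i) ^ Fintype.card K = ζ ^ i ∧
      (ζ ^ (i * r)) ^ Fintype.card K = ζ ^ (i * r) ∨
      (ζ ^ i) ^ Fintype.card K = ζ ^ (i * r) ∧ (ζ ^ (i * r)) ^ Fintype.card K = ζ ^ i := by
    simp only [← pow_mul, mul_right_comm i r]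
    exact hK.imp (fun h ↦ ⟨pow_eq h, pow_eq (h.mul_right r)⟩)
      fun h ↦ ⟨pow_eq h, pow_eq ((h.mul_right r).trans hrr)⟩
  let := ι.toRingHom.toAlgebra
  obtain ⟨hadd, hmul⟩ := add_and_mul_mem_range_algebraMap (K := K) hfrob
  obtain ⟨ρ, hρ⟩ := exists_algHom_matrix_mem_kernelRoots ι hne hadd hmul
    (by rw [pow_right_comm, hζ.pow_eq_one, one_pow]) (pow_mul ζ i r).symm
    (by rw [← pow_mul, pow_eq hrr])
  exact ⟨ρ, fun j hj ↦ Finset.mem_singleton.1 hj ▸ hρ⟩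

end MatrixRepresentation

section Order32

variable {F K₂ K₄ : Type*} [Field F] [Fintype F] [Field K₂] [Fintype K₂] [Algebra F K₂]
  [Field K₄] [Fintype K₄] [Algebra F K₄]

theorem nonempty_algEquiv_of_card_mod_eq_15_or_9
    (hq : Fintype.card F % 16 = 15 ∨ Fintype.card F % 16 = 9)
    (hK₂ : Fintype.card K₂ = Fintype.card F ^ 2) :
    Nonempty (MonoidAlgebra F (QuasidihedralGroup 5) ≃ₐ[F] (F × F) × (F × F) ×
      Matrix (Fin 2) (Fin 2) F × Matrix (Fin 2) (Fin 2) F × Matrix (Fin 2) (Fin 2) F ×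
      Matrix (Fin 2) (Fin 2) K₂ × Matrix (Fin 2) (Fin 2) K₂) := by
  have h2 : (2 : F) ≠ 0 := two_ne_zero_of_odd_card (by rw [Nat.odd_iff]; omega)
  have hq₂ : Fintype.card K₂ % 16 = 1 := by
    rw [hK₂, Nat.pow_mod]
    rcases hq with h | h <;> rw [h]
  obtain ⟨ζ, hζ⟩ := exists_isPrimitiveRoot_two_pow_algebraicClosure h2 (5 - 1)
  have matrix (i : ℕ) := DetectsPowers.matrix (i := i) (Algebra.ofId F (AlgebraicClosure F))
    (by norm_num) hζ
  have matrix₂ (i : ℕ) := DetectsPowers.matrix (i := i)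
    (IsAlgClosed.lift : K₂ →ₐ[F] AlgebraicClosure F) (by norm_num) hζ
  -- `0, 8, 4, 2, 6, 1, 3` represent the orbits of `ℤ/16` under multiplication by `7` and `q`.
  have hdetects := ((matrix 4 (by decide) (by simp only [Nat.ModEq]; omega)).prod <|
    (matrix 2 (by decide) (by simp only [Nat.ModEq]; omega)).prod <|
    (matrix 6 (by decide) (by simp only [Nat.ModEq]; omega)).prod <|
    (matrix₂ 1 (by decide) (by simp only [Nat.ModEq]; omega)).prod <|
    matrix₂ 3 (by decide) (by simp only [Nat.ModEq]; omega)).linear_prod (by norm_num) h2 hζ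
  refine hdetects.nonempty_algEquiv hζ ?_ ?_
  · simp [Module.finrank_matrix, finrank_eq_of_card_eq_pow hK₂]
  · rcases hq with h | h
    · exact exists_mul_pow_modEq_of_modEq (c := 15) (N := 4) h (by decide)
    · exact exists_mul_pow_modEq_of_modEq (c := 9) (N := 4) h (by decide)

theorem nonempty_algEquiv_of_card_mod_eq_3_or_13_or_5_or_11
    (hq : Fintype.card F % 16 = 3 ∨ Fintype.card F % 16 = 13 ∨ Fintype.card F % 16 = 5 ∨
      Fintype.card F % 16 = 11)
    (hK₂ : Fintype.card K₂ = Fintype.card F ^ 2) (hK₄ : Fintype.card K₄ = Fintype.card F ^ 4) :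
    Nonempty (MonoidAlgebra F (QuasidihedralGroup 5) ≃ₐ[F] (F × F) × (F × F) ×
      Matrix (Fin 2) (Fin 2) F × Matrix (Fin 2) (Fin 2) K₂ × Matrix (Fin 2) (Fin 2) K₄) := by
  have h2 : (2 : F) ≠ 0 := two_ne_zero_of_odd_card (by rw [Nat.odd_iff]; omega)
  have hq₂ : Fintype.card K₂ % 16 = 9 := by
    rw [hK₂, Nat.pow_mod]
    rcases hq with h | h | h | h <;> rw [h]
  have hq₄ : Fintype.card K₄ % 16 = 1 := by
    rw [hK₄, Nat.pow_mod]
    rcases hq with h | h | h | h <;> rw [h]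
  obtain ⟨ζ, hζ⟩ := exists_isPrimitiveRoot_two_pow_algebraicClosure h2 (5 - 1)
  -- `0, 8, 4, 2, 1` represent the orbits of `ℤ/16` under multiplication by `7` and `q`.
  have hdetects := ((DetectsPowers.matrix (i := 4) (Algebra.ofId F (AlgebraicClosure F))
      (by norm_num) hζ (by decide) (by simp only [Nat.ModEq]; omega)).prod <|
    (DetectsPowers.matrix (i := 2) (IsAlgClosed.lift : K₂ →ₐ[F] AlgebraicClosure F)
      (by norm_num) hζ (by decide) (by simp only [Nat.ModEq]; omega)).prod <|
    DetectsPowers.matrix (i := 1) (IsAlgClosed.lift : K₄ →ₐ[F] AlgebraicClosure F)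
      (by norm_num) hζ (by decide) (by simp only [Nat.ModEq]; omega)).linear_prod
        (by norm_num) h2 hζ
  refine hdetects.nonempty_algEquiv hζ ?_ ?_
  · simp [Module.finrank_matrix, finrank_eq_of_card_eq_pow hK₂, finrank_eq_of_card_eq_pow hK₄]
  · rcases hq with h | h | h | h
    · exact exists_mul_pow_modEq_of_modEq (c := 3) (N := 4) h (by decide)
    · exact exists_mul_pow_modEq_of_modEq (c := 13) (N := 4) h (by decide)
    · exact exists_mul_pow_modEq_of_modEq (c := 5) (N := 4) h (by decide)
    · exact exists_mul_pow_modEq_of_modEq (c := 11) (N := 4) h (by decide)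

end Order32

end QuasidihedralGroup

/-- For `q ≡ -1, -7 (mod 16)`, `U(F_q[QD_32]) ≅ C_{q-1}⁴ × GL(2,F_q)³ × GL(2,F_{q²})²`,
and for `q ≡ ±3, ±5 (mod 16)`,
`U(F_q[QD_32]) ≅ C_{q-1}⁴ × GL(2,F_q) × GL(2,F_{q²}) × GL(2,F_{q⁴})`. -/
theorem unitGroup_QD32_remaining_cases (F : Type) [Field F] [Fintype F]
    (p n : ℕ) [Fact p.Prime] (hp : Odd p) [CharP F p]
    (hn : 0 < n) (hq : Fintype.card F = p ^ n)
    (K₂ : Type) [Field K₂] [Fintype K₂] [Algebra F K₂]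
    (hK₂ : Fintype.card K₂ = Fintype.card F ^ 2)
    (K₄ : Type) [Field K₄] [Fintype K₄] [Algebra F K₄]
    (hK₄ : Fintype.card K₄ = Fintype.card F ^ 4) :
    ((Fintype.card F % 16 = 15 ∨ Fintype.card F % 16 = 9) →
      Nonempty ((MonoidAlgebra F QD32)ˣ ≃*
        (Multiplicative (ZMod (Fintype.card F - 1)) ×
         Multiplicative (ZMod (Fintype.card F - 1)) ×
         Multiplicative (ZMod (Fintype.card F - 1)) ×
         Multiplicative (ZMod (Fintype.card F - 1)) ×
         Matrix.GeneralLinearGroup (Fin 2) F ×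
         Matrix.GeneralLinearGroup (Fin 2) F ×
         Matrix.GeneralLinearGroup (Fin 2) F ×
         Matrix.GeneralLinearGroup (Fin 2) K₂ ×
         Matrix.GeneralLinearGroup (Fin 2) K₂))) ∧
    ((Fintype.card F % 16 = 3 ∨ Fintype.card F % 16 = 13 ∨
        Fintype.card F % 16 = 5 ∨ Fintype.card F % 16 = 11) →
      Nonempty ((MonoidAlgebra F QD32)ˣ ≃*
        (Multiplicative (ZMod (Fintype.card F - 1)) ×
         Multiplicative (ZMod (Fintype.card F - 1)) ×
         Multiplicative (ZMod (Fintype.card F - 1)) ×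
         Multiplicative (ZMod (Fintype.card F - 1)) ×
         Matrix.GeneralLinearGroup (Fin 2) F ×
         Matrix.GeneralLinearGroup (Fin 2) K₂ ×
         Matrix.GeneralLinearGroup (Fin 2) K₄))) := by
  constructor
  · intro hmod
    obtain ⟨e⟩ := QuasidihedralGroup.nonempty_algEquiv_of_card_mod_eq_15_or_9 hmod hK₂
    exact nonempty_units_mulEquiv_of_mulEquiv_prod (A := MonoidAlgebra F QD32) e.toMulEquiv <|
      MulEquiv.prodUnits.trans <| .prodCongr (.refl _) <|
      MulEquiv.prodUnits.trans <| .prodCongr (.refl _) <|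
      MulEquiv.prodUnits.trans <| .prodCongr (.refl _) .prodUnits
  · intro hmod
    obtain ⟨e⟩ := QuasidihedralGroup.nonempty_algEquiv_of_card_mod_eq_3_or_13_or_5_or_11
      hmod hK₂ hK₄
    exact nonempty_units_mulEquiv_of_mulEquiv_prod (A := MonoidAlgebra F QD32) e.toMulEquiv <|
      MulEquiv.prodUnits.trans <| .prodCongr (.refl _) .prodUnits
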